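/- arXiv:2212.04626 — 2 statements merged into one kernel-verified Lean document; each statement's English description precedes it below -/
import Mathlib

section
/- For every g ∈ O(V) such that p_g is invertible, the operator T_g := q_g∘p_g⁻¹ satisfies: T_g∘J = −J∘T_g (antilinearity), T_gᵗ = −T_g (skewsymmetry), 1 − T_g² = (p_g∘p_gᵗ)⁻¹, and 1 − T_g² ≥ 1 (i.e., −T_g² is positive semidefinite). -/
open scoped RealInnerProductSpace

/-!
Write `g = p + q` with `p` commuting and `q` anticommuting with `J`. This decomposition is a
`ℤ/2`-grading, and it is compatible with the involution because `star J = -J`. Hence the even and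
odd components of `star g * g = 1` are `star p * p + star q * q = 1` and
`star p * q + star q * p = 0`. Multiplying by `star p⁻¹` on the left and by `p⁻¹` on the right
turns the second into the skewness of `T = q p⁻¹` and the first into
`1 + star T * T = (p * star p)⁻¹`; skewness then gives `-T² = star T * T`.
-/

section Conj

variable {R : Type*} [Ring R] {J : R}

lemma mul_conj_of_mul_self_eq_neg_one (hJ : J * J = -1) (a : R) : J * (J * a * J) = -(a * J) := by
  simp only [← mul_assoc, hJ, neg_mul, one_mul]

lemma conj_mul_of_mul_self_eq_neg_one (hJ : J * J = -1) (a : R) : J * a * J * J = -(J * a) := by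
  rw [mul_assoc, hJ, mul_neg_one]

lemma conj_mul_conj_of_mul_self_eq_neg_one (hJ : J * J = -1) (a b : R) :
    J * a * J * (J * b * J) = -(J * (a * b) * J) := by
  rw [mul_assoc, mul_conj_of_mul_self_eq_neg_one hJ, mul_neg, mul_assoc, mul_assoc, mul_assoc]

end Conj

lemma star_inv_two_smul {K M : Type*} [DivisionSemiring K] [AddCommMonoid M] [Module K M]
    [StarAddMonoid M] (x : M) : star ((2⁻¹ : K) • x) = (2⁻¹ : K) • star x := by
  exact_mod_cast star_inv_natCast_smul (R := K) 2 x

section Parts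

variable {R : Type*} [Ring R] (K : Type*) [Field K] [Algebra K R] {J : R}

/-- The `J`-linear part `p_g` of `g`, where `J * J = -1`: its component commuting with `J`.
The field `K` only supplies the scalar `1/2`, so `2 ≠ 0` in `K` is intended. -/
def linearPart (J g : R) : R := (2⁻¹ : K) • (g - J * g * J)

/-- The `J`-antilinear part `q_g` of `g`, where `J * J = -1`: its component anticommuting
with `J`. -/
def antilinearPart (J g : R) : R := (2⁻¹ : K) • (g + J * g * J)

lemma commute_linearPart (hJ : J * J = -1) (g : R) : Commute (linearPart K J g) J := by
  rw [commute_iff_eq, linearPart, smul_mul_assoc, mul_smul_comm, sub_mul, mul_sub,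
    mul_conj_of_mul_self_eq_neg_one hJ, conj_mul_of_mul_self_eq_neg_one hJ, sub_neg_eq_add,
    sub_neg_eq_add, add_comm]

lemma semiconjBy_antilinearPart (hJ : J * J = -1) (g : R) :
    SemiconjBy (antilinearPart K J g) J (-J) := by
  rw [SemiconjBy, antilinearPart, smul_mul_assoc, neg_mul, mul_smul_comm, add_mul, mul_add,
    mul_conj_of_mul_self_eq_neg_one hJ, conj_mul_of_mul_self_eq_neg_one hJ, ← smul_neg, neg_add,
    neg_neg, add_comm]

section NeZero

variable [NeZero (2 : K)]

lemma linearPart_mul (hJ : J * J = -1) (a b : R) :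
    linearPart K J (a * b) =
      linearPart K J a * linearPart K J b + antilinearPart K J a * antilinearPart K J b := by
  have h2 : (2 : K) ≠ 0 := two_ne_zero
  simp only [linearPart, antilinearPart, smul_mul_smul_comm, sub_mul, mul_sub, add_mul, mul_add,
    conj_mul_conj_of_mul_self_eq_neg_one hJ]
  match_scalars <;> field_simp <;> ring

lemma antilinearPart_mul (hJ : J * J = -1) (a b : R) :
    antilinearPart K J (a * b) =
      linearPart K J a * antilinearPart K J b + antilinearPart K J a * linearPart K J b := by
  have h2 : (2 : K) ≠ 0 := two_ne_zero
  simp only [linearPart, antilinearPart, smul_mul_smul_comm, sub_mul, mul_sub, add_mul, mul_add,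
    conj_mul_conj_of_mul_self_eq_neg_one hJ]
  match_scalars <;> field_simp <;> ring

lemma linearPart_one (hJ : J * J = -1) : linearPart K J 1 = 1 := by
  rw [linearPart, mul_one, hJ, sub_neg_eq_add, ← two_smul K (1 : R), inv_smul_smul₀ two_ne_zero]

end NeZero

lemma antilinearPart_one (hJ : J * J = -1) : antilinearPart K J 1 = 0 := by
  rw [antilinearPart, mul_one, hJ, add_neg_cancel, smul_zero]

section Star

variable [StarRing R]

lemma star_linearPart (hJ : star J = -J) (g : R) :
    star (linearPart K J g) = linearPart K J (star g) := by
  simp [linearPart, star_inv_two_smul, hJ, mul_assoc]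

lemma star_antilinearPart (hJ : star J = -J) (g : R) :
    star (antilinearPart K J g) = antilinearPart K J (star g) := by
  simp [antilinearPart, star_inv_two_smul, hJ, mul_assoc]

end Star

end Parts

lemma star_ringInverse_mul_star {M : Type*} [MonoidWithZero M] [StarMul M] {p : M}
    (hp : IsUnit p) : star (Ring.inverse p) * star p = 1 := by
  rw [← star_mul, Ring.mul_inverse_cancel p hp, star_one]

lemma star_mul_ringInverse_eq_neg {R : Type*} [Ring R] [StarMul R] {p q : R} (hp : IsUnit p)
    (h : star p * q + star q * p = 0) :
    star (q * Ring.inverse p) = -(q * Ring.inverse p) := by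
  calc star (q * Ring.inverse p)
      = star (Ring.inverse p) * (star q * p) * Ring.inverse p := by
        rw [star_mul, mul_assoc, Ring.mul_inverse_cancel_right _ _ hp]
    _ = -(star (Ring.inverse p) * star p * (q * Ring.inverse p)) := by
        rw [eq_neg_of_add_eq_zero_right h]; noncomm_ring
    _ = -(q * Ring.inverse p) := by rw [star_ringInverse_mul_star hp, one_mul]

lemma one_add_star_mul_self_mul_ringInverse {R : Type*} [Semiring R] [StarRing R] {p q : R}
    (hp : IsUnit p) (h : star p * p + star q * q = 1) :
    1 + star (q * Ring.inverse p) * (q * Ring.inverse p) = Ring.inverse (p * star p) := by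
  calc 1 + star (q * Ring.inverse p) * (q * Ring.inverse p)
      = star (Ring.inverse p) * star p * (p * Ring.inverse p)
          + star (q * Ring.inverse p) * (q * Ring.inverse p) := by
        rw [star_ringInverse_mul_star hp, Ring.mul_inverse_cancel p hp, one_mul]
    _ = star (Ring.inverse p) * (star p * p + star q * q) * Ring.inverse p := by
        simp only [star_mul, mul_add, add_mul, mul_assoc]
    _ = Ring.inverse (p * star p) := by
        rw [h, mul_one, Ring.inverse_mul (.inl hp), Ring.inverse_star]

lemma commute_ringInverse_left {M : Type*} [MonoidWithZero M] {a b : M} (ha : IsUnit a)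
    (h : Commute a b) : Commute (Ring.inverse a) b := by
  obtain ⟨u, rfl⟩ := ha
  rw [Ring.inverse_unit]
  exact h.units_inv_left

theorem stmt_5_general {R : Type*} [Ring R] [StarRing R] (K : Type*) [Field K] [NeZero (2 : K)]
    [Algebra K R] {J g p q T : R} (hJ : J * J = -1) (hJs : star J * J = 1)
    (hg : star g * g = 1) (hp : p = linearPart K J g) (hq : q = antilinearPart K J g)
    (hpu : IsUnit p) (hT : T = q * Ring.inverse p) :
    T * J = -(J * T) ∧ star T = -T ∧ 1 - T * T = Ring.inverse (p * star p) ∧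
      -(T * T) = star T * T := by
  have hstar : star J = -J := left_inv_eq_right_inv hJs (by rw [mul_neg, hJ, neg_neg])
  have heven : star p * p + star q * q = 1 := by
    rw [hp, hq, star_linearPart K hstar, star_antilinearPart K hstar, ← linearPart_mul K hJ, hg,
      linearPart_one K hJ]
  have hodd : star p * q + star q * p = 0 := by
    rw [hp, hq, star_linearPart K hstar, star_antilinearPart K hstar, ← antilinearPart_mul K hJ, hg,
      antilinearPart_one K hJ]
  have hTJ : SemiconjBy T J (-J) := by
    rw [hT, hq]
    exact (semiconjBy_antilinearPart K hJ g).mul_left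
      (commute_ringInverse_left hpu (hp ▸ commute_linearPart K hJ g))
  have hskew : star T = -T := hT ▸ star_mul_ringInverse_eq_neg hpu hodd
  have hsq : -(T * T) = star T * T := by rw [hskew, neg_mul]
  refine ⟨hTJ.eq.trans (neg_mul J T), hskew, ?_, hsq⟩
  rw [sub_eq_add_neg, hsq, hT, one_add_star_mul_self_mul_ringInverse hpu heven]

/-- For every `g ∈ O(V)` such that `p_g` is invertible, the operator
`T_g := q_g∘p_g⁻¹` satisfies: `T_g∘J = −J∘T_g` (antilinearity), `T_gᵗ = −T_g`
(skewsymmetry), `1 − T_g² = (p_g∘p_gᵗ)⁻¹`, and `1 − T_g² ≥ 1` (i.e., `−T_g²` is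
positive semidefinite). -/
theorem stmt_5 {V : Type*} [NormedAddCommGroup V] [InnerProductSpace ℝ V]
    [FiniteDimensional ℝ V] (m : ℕ) (hdim : Module.finrank ℝ V = 2 * m)
    (J : Module.End ℝ V) (hJ2 : J * J = -1)
    (hJd : ∀ u v : V, ⟪J u, J v⟫ = ⟪u, v⟫)
    (g : Module.End ℝ V) (hgo : LinearMap.adjoint g * g = 1)
    (p q T : Module.End ℝ V)
    (hp : p = (2⁻¹ : ℝ) • (g - J * g * J))
    (hq : q = (2⁻¹ : ℝ) • (g + J * g * J))
    (hpu : IsUnit p)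
    (hT : T = q * Ring.inverse p) :
    T * J = -(J * T) ∧
    LinearMap.adjoint T = -T ∧
    1 - T * T = Ring.inverse (p * LinearMap.adjoint p) ∧
    (∀ v : V, 0 ≤ ⟪v, (-(T * T)) v⟫) := by
  obtain ⟨hanti, hskew, hinv, hsq⟩ := stmt_5_general ℝ hJ2
    (J.isometryOfInner hJd).adjoint_comp_self' hgo hp hq hpu hT
  exact ⟨hanti, hskew, hinv, fun v => hsq ▸ T.isPositive_adjoint_comp_self.inner_nonneg_right v⟩
end

section
/- Let g, h ∈ O(V) with p_g, p_h and p_{gh} invertible, and let S : V → V be ℝ-linear with S∘J = −J∘S and Sᵗ = −S. Assume 1 − T̂_h∘S and 1 − T̂_g∘(h·S) are invertible, where h·S := T_h + (p_hᵗ)⁻¹ ∘ S ∘ (1 − T̂_h∘S)⁻¹ ∘ p_h⁻¹. Viewing V as a complex vector space via (a+bi)·v := av + bJv, the four operators below are ℂ-linear and their complex determinants satisfy det_ℂ(1 − S∘T̂_{gh}) · det_ℂ(1 − T_h∘T̂_g) = det_ℂ(1 − S∘T̂_h) · det_ℂ(1 − (h·S)∘T̂_g). -/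
open scoped RealInnerProductSpace Classical

/-- The determinant of an ℝ-linear endomorphism `A` of `V` as a ℂ-linear operator, for the
complex structure on `V` given by `J` (with `(a+bi)•v := a•v + b•(J v)`).  If `J` is not a
complex structure, or `A` does not commute with `J` (i.e. is not ℂ-linear), the junk value
`0` is returned. -/
noncomputable def cdet {V : Type*} [AddCommGroup V] [Module ℝ V]
    (J A : Module.End ℝ V) : ℂ :=
  if h : J * J = -1 ∧ A * J = J * A then
    letI : SMul ℂ V := ⟨fun z v => z.re • v + z.im • J v⟩
    letI : Module ℂ V := Module.ofMinimalAxioms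
      (fun z x y => by
        show z.re • (x + y) + z.im • J (x + y) =
          (z.re • x + z.im • J x) + (z.re • y + z.im • J y)
        rw [map_add]; module)
      (fun z w x => by
        show (z + w).re • x + (z + w).im • J x =
          (z.re • x + z.im • J x) + (w.re • x + w.im • J x)
        rw [Complex.add_re, Complex.add_im]; module)
      (fun z w x => by
        show (z * w).re • x + (z * w).im • J x =
          z.re • (w.re • x + w.im • J x) + z.im • J (w.re • x + w.im • J x)
        have hJx : J (J x) = -x := by
          have h1 := congrArg (fun f : Module.End ℝ V => f x) h.1
          simpa using h1
        rw [Complex.mul_re, Complex.mul_im, map_add, map_smul, map_smul, hJx]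
        module)
      (fun x => by
        show (1 : ℂ).re • x + (1 : ℂ).im • J x = x
        simp)
    LinearMap.det
      ({ toFun := A
         map_add' := A.map_add
         map_smul' := fun z v => by
           show A (z.re • v + z.im • J v) = z.re • A v + z.im • J (A v)
           have hAJ : A (J v) = J (A v) := by
             have h2 := congrArg (fun f : Module.End ℝ V => f v) h.2
             simpa using h2
           rw [map_add, map_smul, map_smul, hAJ] } : V →ₗ[ℂ] V)
  else 0

/-!
Write `p, q` for the ℂ-linear and ℂ-antilinear parts, and `p', q'` for those of `h⁻¹`.  Splitting
`h⁻¹ h = 1` into parts shows that the action is a Möbius transformation,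
`h·S = (p' - S q')⁻¹ (S p' - q')`, and splitting `(gh)⁻¹ = h⁻¹ g⁻¹` then gives two expressions for
`p_{(gh)⁻¹} - S q_{(gh)⁻¹}`, namely
`(1 - S T̂_{gh}) p' (1 - T_h T̂_g) p_{g⁻¹} = (1 - S T̂_h) p' (1 - (h·S) T̂_g) p_{g⁻¹}`.
Cancel `p_{g⁻¹}`, take complex determinants and cancel that of `p'`.  For `h ∈ O(V)` one has
`p' = p_hᵗ`.
-/

open scoped Ring

section Semiconj

variable {R : Type*}

theorem semiconjBy_ringInverse_left [MonoidWithZero R] {a x y : R} (h : SemiconjBy a x y) :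
    SemiconjBy a⁻¹ʳ y x := by
  by_cases ha : IsUnit a
  · obtain ⟨u, rfl⟩ := ha
    rw [Ring.inverse_unit]
    exact h.units_inv_symm_left
  · rw [Ring.inverse_non_unit a ha, SemiconjBy, zero_mul, mul_zero]

theorem commute_one_sub_mul_of_anticommute [Ring R] {J a b : R} (ha : SemiconjBy a J (-J))
    (hb : SemiconjBy b J (-J)) : Commute (1 - a * b) J := by
  have hab : SemiconjBy (a * b) J J := by
    simpa only [neg_neg] using ha.neg_right.mul_left hb
  exact (Commute.one_left J).sub_left hab

theorem one_sub_mul_mul_self [Ring R] (a b : R) : (1 - a * b) * a = a * (1 - b * a) := by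
  noncomm_ring

end Semiconj

section Parts

variable {R : Type*} [Ring R] [Algebra ℝ R]

/-- The part `p_a = ½(a - J a J)` of `a` that commutes with a complex structure `J`. -/
noncomputable def linPart (J a : R) : R :=
  (2⁻¹ : ℝ) • (a - J * a * J)

/-- The part `q_a = ½(a + J a J)` of `a` that anticommutes with a complex structure `J`. -/
noncomputable def antilinPart (J a : R) : R :=
  (2⁻¹ : ℝ) • (a + J * a * J)

/-- The ratio `T_a = q_a p_a⁻¹` of the antilinear to the linear part, with `T̂_a` being
`antilinRatio J a⁻¹ʳ`.  It has the junk value `0` when `p_a` is not invertible. -/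
noncomputable def antilinRatio (J a : R) : R :=
  antilinPart J a * (linPart J a)⁻¹ʳ

/-- The fractional linear action `h·S = T_h + p'⁻¹ S (1 - T̂_h S)⁻¹ p_h⁻¹`, where `p'` is the linear
part of `h⁻¹`; for orthogonal `h` this `p'` is the transpose of `p_h`. -/
noncomputable def mobiusAct (J h S : R) : R :=
  antilinRatio J h +
    (linPart J h⁻¹ʳ)⁻¹ʳ * S * (1 - antilinRatio J h⁻¹ʳ * S)⁻¹ʳ * (linPart J h)⁻¹ʳ

variable {J : R}

theorem linPart_commute (hJ : J * J = -1) (a : R) : Commute (linPart J a) J := by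
  have hl : (a - J * a * J) * J = a * J + J * a := by
    rw [sub_mul, mul_assoc _ J J, hJ]; noncomm_ring
  have hr : J * (a - J * a * J) = a * J + J * a := by
    rw [mul_sub, mul_assoc J a J, ← mul_assoc J J, hJ]; noncomm_ring
  rw [linPart, commute_iff_eq, smul_mul_assoc, mul_smul_comm, hl, hr]

theorem antilinPart_anticommute (hJ : J * J = -1) (a : R) :
    SemiconjBy (antilinPart J a) J (-J) := by
  have hl : (a + J * a * J) * J = a * J - J * a := by
    rw [add_mul, mul_assoc _ J J, hJ]; noncomm_ring
  have hr : -J * (a + J * a * J) = a * J - J * a := by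
    rw [mul_add, mul_assoc J a J, ← mul_assoc (-J) J, neg_mul J J, hJ]; noncomm_ring
  rw [antilinPart, SemiconjBy, smul_mul_assoc, mul_smul_comm, hl, hr]

theorem antilinRatio_anticommute (hJ : J * J = -1) (a : R) :
    SemiconjBy (antilinRatio J a) J (-J) :=
  (antilinPart_anticommute hJ a).mul_left (semiconjBy_ringInverse_left (linPart_commute hJ a))

theorem mobiusAct_anticommute (hJ : J * J = -1) (h : R) {S : R} (hS : SemiconjBy S J (-J)) :
    SemiconjBy (mobiusAct J h S) J (-J) := by
  have hden : Commute (1 - antilinRatio J h⁻¹ʳ * S) J :=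
    commute_one_sub_mul_of_anticommute (antilinRatio_anticommute hJ _) hS
  have hp' : SemiconjBy (linPart J h⁻¹ʳ)⁻¹ʳ (-J) (-J) :=
    SemiconjBy.neg_right (semiconjBy_ringInverse_left (linPart_commute hJ _))
  exact (antilinRatio_anticommute hJ h).add_left
    (((hp'.mul_left hS).mul_left (semiconjBy_ringInverse_left hden)).mul_left
      (semiconjBy_ringInverse_left (linPart_commute hJ h)))

theorem linPart_one (hJ : J * J = -1) : linPart J 1 = 1 := by
  rw [linPart, mul_one, hJ]; module

theorem antilinPart_one (hJ : J * J = -1) : antilinPart J 1 = 0 := by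
  rw [antilinPart, mul_one, hJ, add_neg_cancel, smul_zero]

theorem linPart_mul (hJ : J * J = -1) (a b : R) :
    linPart J (a * b) = linPart J a * linPart J b + antilinPart J a * antilinPart J b := by
  have hJJ (x : R) : J * (J * x) = -x := by rw [← mul_assoc, hJ, neg_one_mul]
  simp only [linPart, antilinPart, smul_mul_assoc, mul_smul_comm, add_mul, mul_add, sub_mul,
    mul_sub, mul_assoc, hJJ, mul_neg]
  module

theorem antilinPart_mul (hJ : J * J = -1) (a b : R) :
    antilinPart J (a * b) = antilinPart J a * linPart J b + linPart J a * antilinPart J b := by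
  have hJJ (x : R) : J * (J * x) = -x := by rw [← mul_assoc, hJ, neg_one_mul]
  simp only [linPart, antilinPart, smul_mul_assoc, mul_smul_comm, add_mul, mul_add, sub_mul,
    mul_sub, mul_assoc, hJJ, mul_neg]
  module

theorem star_linPart [StarRing R] [StarModule ℝ R] (hJ : star J = -J) (a : R) :
    star (linPart J a) = linPart J (star a) := by
  simp only [linPart, star_smul, star_sub, star_mul, hJ, star_trivial, neg_mul, mul_neg, neg_neg,
    mul_assoc]

theorem antilinRatio_mul_linPart {a : R} (ha : IsUnit (linPart J a)) :
    antilinRatio J a * linPart J a = antilinPart J a :=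
  Ring.inverse_mul_cancel_right _ _ ha

theorem one_sub_mul_antilinRatio_mul_linPart {a : R} (ha : IsUnit (linPart J a)) (S : R) :
    (1 - S * antilinRatio J a) * linPart J a = linPart J a - S * antilinPart J a := by
  rw [sub_mul, one_mul, mul_assoc, antilinRatio_mul_linPart ha]

theorem linPart_mul_antilinRatio (hJ : J * J = -1) {a b : R} (hab : a * b = 1)
    (hb : IsUnit (linPart J b)) : linPart J a * antilinRatio J b = -antilinPart J a := by
  have hq : linPart J a * antilinPart J b = -(antilinPart J a * linPart J b) := by
    rw [eq_neg_iff_add_eq_zero, add_comm, ← antilinPart_mul hJ, hab, antilinPart_one hJ]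
  rw [antilinRatio, ← mul_assoc, hq, neg_mul, Ring.mul_inverse_cancel_right _ _ hb]

theorem antilinPart_mul_antilinRatio (hJ : J * J = -1) {a b : R} (hab : a * b = 1)
    (hb : IsUnit (linPart J b)) :
    antilinPart J a * antilinRatio J b = (linPart J b)⁻¹ʳ - linPart J a := by
  have hq : antilinPart J a * antilinPart J b = 1 - linPart J a * linPart J b := by
    rw [eq_sub_iff_add_eq', ← linPart_mul hJ, hab, linPart_one hJ]
  rw [antilinRatio, ← mul_assoc, hq, sub_mul, one_mul, Ring.mul_inverse_cancel_right _ _ hb]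

/-- The inverse of `p_{a⁻¹}` is the Schur complement `p_a - q_a p_a⁻¹ q_a`. -/
theorem isUnit_linPart_ringInverse (hJ : J * J = -1) {a : R} (ha : IsUnit a)
    (hp : IsUnit (linPart J a)) : IsUnit (linPart J a⁻¹ʳ) := by
  have hleft : linPart J a⁻¹ʳ * (linPart J a - antilinRatio J a * antilinPart J a) = 1 := by
    rw [mul_sub, ← mul_assoc,
      linPart_mul_antilinRatio hJ (Ring.inverse_mul_cancel a ha) hp, neg_mul, sub_neg_eq_add,
      ← linPart_mul hJ, Ring.inverse_mul_cancel a ha, linPart_one hJ]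
  have hright : (linPart J a - antilinRatio J a * antilinPart J a) * linPart J a⁻¹ʳ = 1 := by
    have hq : antilinPart J a * linPart J a⁻¹ʳ = -(linPart J a * antilinPart J a⁻¹ʳ) := by
      rw [eq_neg_iff_add_eq_zero, ← antilinPart_mul hJ, Ring.mul_inverse_cancel a ha,
        antilinPart_one hJ]
    rw [sub_mul, mul_assoc, hq, mul_neg, ← mul_assoc, antilinRatio_mul_linPart hp, sub_neg_eq_add,
      ← linPart_mul hJ, Ring.mul_inverse_cancel a ha, linPart_one hJ]
  exact ⟨⟨_, _, hleft, hright⟩, rfl⟩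

theorem linPart_mul_eq_mul_one_sub_mul (hJ : J * J = -1) {a b h : R} (hah : a * h = 1)
    (hh : IsUnit (linPart J h)) (hb : IsUnit (linPart J b)) :
    linPart J (a * b) =
      linPart J a * (1 - antilinRatio J h * antilinRatio J b) * linPart J b := by
  symm
  calc linPart J a * (1 - antilinRatio J h * antilinRatio J b) * linPart J b
      = linPart J a * linPart J b -
          linPart J a * antilinRatio J h * (antilinRatio J b * linPart J b) := by noncomm_ring
    _ = linPart J a * linPart J b + antilinPart J a * antilinPart J b := by
      rw [linPart_mul_antilinRatio hJ hah hh, antilinRatio_mul_linPart hb, neg_mul, sub_neg_eq_add]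
    _ = linPart J (a * b) := (linPart_mul hJ a b).symm

theorem linPart_sub_mul_antilinPart_mul_mobiusAct (hJ : J * J = -1) {h S : R} (hh : IsUnit h)
    (hp : IsUnit (linPart J h)) (hS : IsUnit (1 - antilinRatio J h⁻¹ʳ * S)) :
    (linPart J h⁻¹ʳ - S * antilinPart J h⁻¹ʳ) * mobiusAct J h S =
      S * linPart J h⁻¹ʳ - antilinPart J h⁻¹ʳ := by
  have hinv : h⁻¹ʳ * h = 1 := Ring.inverse_mul_cancel h hh
  have hp' : IsUnit (linPart J h⁻¹ʳ) := isUnit_linPart_ringInverse hJ hh hp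
  have hfirst : (linPart J h⁻¹ʳ - S * antilinPart J h⁻¹ʳ) * antilinRatio J h =
      S * linPart J h⁻¹ʳ - antilinPart J h⁻¹ʳ - S * (linPart J h)⁻¹ʳ := by
    rw [sub_mul, mul_assoc S, linPart_mul_antilinRatio hJ hinv hp,
      antilinPart_mul_antilinRatio hJ hinv hp]
    noncomm_ring
  have hsecond : (linPart J h⁻¹ʳ - S * antilinPart J h⁻¹ʳ) *
      ((linPart J h⁻¹ʳ)⁻¹ʳ * S * (1 - antilinRatio J h⁻¹ʳ * S)⁻¹ʳ * (linPart J h)⁻¹ʳ) =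
        S * (linPart J h)⁻¹ʳ := by
    simp only [← mul_assoc]
    rw [← one_sub_mul_antilinRatio_mul_linPart hp', Ring.mul_inverse_cancel_right _ _ hp',
      one_sub_mul_mul_self, Ring.mul_inverse_cancel_right _ _ hS]
  rw [mobiusAct, mul_add, hfirst, hsecond, sub_add_cancel]

theorem linPart_mul_sub_mul_antilinPart_mul (hJ : J * J = -1) {h b S : R} (hh : IsUnit h)
    (hp : IsUnit (linPart J h)) (hb : IsUnit (linPart J b))
    (hS : IsUnit (1 - antilinRatio J h⁻¹ʳ * S)) :
    linPart J (h⁻¹ʳ * b) - S * antilinPart J (h⁻¹ʳ * b) =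
      (linPart J h⁻¹ʳ - S * antilinPart J h⁻¹ʳ) *
        (1 - mobiusAct J h S * antilinRatio J b) * linPart J b := by
  symm
  calc (linPart J h⁻¹ʳ - S * antilinPart J h⁻¹ʳ) *
        (1 - mobiusAct J h S * antilinRatio J b) * linPart J b
      = (linPart J h⁻¹ʳ - S * antilinPart J h⁻¹ʳ) * linPart J b -
          (linPart J h⁻¹ʳ - S * antilinPart J h⁻¹ʳ) * mobiusAct J h S *
            (antilinRatio J b * linPart J b) := by noncomm_ring
    _ = (linPart J h⁻¹ʳ - S * antilinPart J h⁻¹ʳ) * linPart J b -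
          (S * linPart J h⁻¹ʳ - antilinPart J h⁻¹ʳ) * antilinPart J b := by
      rw [linPart_sub_mul_antilinPart_mul_mobiusAct hJ hh hp hS, antilinRatio_mul_linPart hb]
    _ = linPart J (h⁻¹ʳ * b) - S * antilinPart J (h⁻¹ʳ * b) := by
      rw [linPart_mul hJ, antilinPart_mul hJ]
      noncomm_ring

theorem one_sub_mul_linPart_mul_one_sub (hJ : J * J = -1) {g h S : R} (hg : IsUnit g)
    (hh : IsUnit h) (hpg : IsUnit (linPart J g)) (hph : IsUnit (linPart J h))
    (hpgh : IsUnit (linPart J (g * h))) (hS : IsUnit (1 - antilinRatio J h⁻¹ʳ * S)) :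
    (1 - S * antilinRatio J (g * h)⁻¹ʳ) *
        (linPart J h⁻¹ʳ * (1 - antilinRatio J h * antilinRatio J g⁻¹ʳ)) =
      (1 - S * antilinRatio J h⁻¹ʳ) *
        (linPart J h⁻¹ʳ * (1 - mobiusAct J h S * antilinRatio J g⁻¹ʳ)) := by
  have hpg' := isUnit_linPart_ringInverse hJ hg hpg
  have hph' := isUnit_linPart_ringInverse hJ hh hph
  have hpgh' := isUnit_linPart_ringInverse hJ (hg.mul hh) hpgh
  have hinv : (g * h)⁻¹ʳ = h⁻¹ʳ * g⁻¹ʳ := Ring.inverse_mul (.inl hg)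
  refine hpg'.mul_right_cancel ?_
  calc _ = (1 - S * antilinRatio J (g * h)⁻¹ʳ) * linPart J (g * h)⁻¹ʳ := by
        rw [mul_assoc, hinv,
          linPart_mul_eq_mul_one_sub_mul hJ (Ring.inverse_mul_cancel h hh) hph hpg']
    _ = linPart J (h⁻¹ʳ * g⁻¹ʳ) - S * antilinPart J (h⁻¹ʳ * g⁻¹ʳ) := by
        rw [one_sub_mul_antilinRatio_mul_linPart hpgh', hinv]
    _ = _ := by
        rw [linPart_mul_sub_mul_antilinPart_mul hJ hh hph hpg' hS,
          ← one_sub_mul_antilinRatio_mul_linPart hph', mul_assoc (1 - _) (linPart J h⁻¹ʳ)]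

end Parts

section ComplexDeterminant

-- The ℂ-module structure in `cdet` is no instance, so these two lemmas find theirs by unification.
theorem det_eq_mul_of_forall_apply_eq {R M : Type*} [CommRing R] [AddCommGroup M]
    {_ : Module R M} {f f₁ f₂ : M →ₗ[R] M} (hf : ∀ x, f x = f₁ (f₂ x)) :
    LinearMap.det f = LinearMap.det f₁ * LinearMap.det f₂ := by
  rw [← LinearMap.det_comp]
  exact congrArg LinearMap.det (LinearMap.ext hf)

theorem det_eq_one_of_forall_apply_eq_self {R M : Type*} [CommRing R] [AddCommGroup M]
    {_ : Module R M} {f : M →ₗ[R] M} (hf : ∀ x, f x = x) : LinearMap.det f = 1 :=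
  (congrArg LinearMap.det (LinearMap.ext hf)).trans LinearMap.det_id

variable {V : Type*} [AddCommGroup V] [Module ℝ V] {J A B : Module.End ℝ V}

theorem cdet_mul (hJ : J * J = -1) (hA : Commute A J) (hB : Commute B J) :
    cdet J (A * B) = cdet J A * cdet J B := by
  rw [cdet, cdet, cdet, dif_pos ⟨hJ, hA.mul_left hB⟩, dif_pos ⟨hJ, hA⟩, dif_pos ⟨hJ, hB⟩]
  exact det_eq_mul_of_forall_apply_eq (M := V) fun _ => rfl

theorem cdet_one (hJ : J * J = -1) : cdet J 1 = 1 := by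
  rw [cdet, dif_pos ⟨hJ, Commute.one_left J⟩]
  exact det_eq_one_of_forall_apply_eq_self (M := V) fun _ => rfl

theorem cdet_ne_zero (hJ : J * J = -1) (hA : Commute A J) (hu : IsUnit A) : cdet J A ≠ 0 := by
  have hinv : cdet J A * cdet J A⁻¹ʳ = 1 := by
    rw [← cdet_mul hJ hA (semiconjBy_ringInverse_left hA), Ring.mul_inverse_cancel A hu,
      cdet_one hJ]
  exact left_ne_zero_of_mul_eq_one hinv

end ComplexDeterminant

section Orthogonal

variable {V : Type*} [NormedAddCommGroup V] [InnerProductSpace ℝ V] [FiniteDimensional ℝ V]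

theorem adjoint_eq_neg_of_inner_map_map {J : Module.End ℝ V} (hJ : J * J = -1)
    (hJd : ∀ u v : V, ⟪J u, J v⟫ = ⟪u, v⟫) : LinearMap.adjoint J = -J := by
  have hleft : LinearMap.adjoint J * J = 1 := (J.isometryOfInner hJd).adjoint_comp_self'
  exact left_inv_eq_right_inv hleft (by rw [mul_neg, hJ, neg_neg])

theorem ringInverse_eq_adjoint {h : Module.End ℝ V} (hh : LinearMap.adjoint h * h = 1) :
    h⁻¹ʳ = LinearMap.adjoint h :=
  Ring.inverse_unit ⟨h, LinearMap.adjoint h, mul_eq_one_comm.1 hh, hh⟩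

theorem adjoint_linPart {J h : Module.End ℝ V} (hJ : J * J = -1)
    (hJd : ∀ u v : V, ⟪J u, J v⟫ = ⟪u, v⟫) (hh : LinearMap.adjoint h * h = 1) :
    LinearMap.adjoint (linPart J h) = linPart J h⁻¹ʳ := by
  rw [ringInverse_eq_adjoint hh]
  exact star_linPart (adjoint_eq_neg_of_inner_map_map hJ hJd) h

end Orthogonal

theorem stmt_12_general {V : Type*} [AddCommGroup V] [Module ℝ V] [FiniteDimensional ℝ V]
    {J g h S : Module.End ℝ V} (hJ : J * J = -1) (hg : IsUnit g) (hh : IsUnit h)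
    (hpg : IsUnit (linPart J g)) (hph : IsUnit (linPart J h)) (hpgh : IsUnit (linPart J (g * h)))
    (hSJ : SemiconjBy S J (-J)) (hS : IsUnit (1 - antilinRatio J h⁻¹ʳ * S)) :
    Commute (1 - S * antilinRatio J (g * h)⁻¹ʳ) J ∧
    Commute (1 - antilinRatio J h * antilinRatio J g⁻¹ʳ) J ∧
    Commute (1 - S * antilinRatio J h⁻¹ʳ) J ∧
    Commute (1 - mobiusAct J h S * antilinRatio J g⁻¹ʳ) J ∧
    cdet J (1 - S * antilinRatio J (g * h)⁻¹ʳ) *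
        cdet J (1 - antilinRatio J h * antilinRatio J g⁻¹ʳ) =
      cdet J (1 - S * antilinRatio J h⁻¹ʳ) *
        cdet J (1 - mobiusAct J h S * antilinRatio J g⁻¹ʳ) := by
  have hT := antilinRatio_anticommute hJ
  have c₁ := commute_one_sub_mul_of_anticommute hSJ (hT (g * h)⁻¹ʳ)
  have c₂ := commute_one_sub_mul_of_anticommute (hT h) (hT g⁻¹ʳ)
  have c₃ := commute_one_sub_mul_of_anticommute hSJ (hT h⁻¹ʳ)
  have c₄ := commute_one_sub_mul_of_anticommute (mobiusAct_anticommute hJ h hSJ) (hT g⁻¹ʳ)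
  have hp' : Commute (linPart J h⁻¹ʳ) J := linPart_commute hJ _
  refine ⟨c₁, c₂, c₃, c₄, ?_⟩
  apply mul_left_cancel₀ (cdet_ne_zero hJ hp' (isUnit_linPart_ringInverse hJ hh hph))
  have hdet := congrArg (cdet J) (one_sub_mul_linPart_mul_one_sub hJ hg hh hpg hph hpgh hS)
  rw [cdet_mul hJ c₁ (hp'.mul_left c₂), cdet_mul hJ hp' c₂, cdet_mul hJ c₃ (hp'.mul_left c₄),
    cdet_mul hJ hp' c₄] at hdet
  linear_combination hdet


/-- Let `g, h ∈ O(V)` with `p_g`, `p_h` and `p_{gh}` invertible, and let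
`S : V → V` be ℝ-linear with `S∘J = −J∘S` and `Sᵗ = −S`. Assume `1 − T̂_h∘S` and
`1 − T̂_g∘(h·S)` are invertible, where
`h·S := T_h + (p_hᵗ)⁻¹ ∘ S ∘ (1 − T̂_h∘S)⁻¹ ∘ p_h⁻¹`. Viewing `V` as a complex vector
space via `(a+bi)·v := av + bJv`, the four operators below are ℂ-linear and their complex
determinants satisfy
`det_ℂ(1 − S∘T̂_{gh}) · det_ℂ(1 − T_h∘T̂_g) = det_ℂ(1 − S∘T̂_h) · det_ℂ(1 − (h·S)∘T̂_g)`. -/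
theorem stmt_12 {V : Type*} [NormedAddCommGroup V] [InnerProductSpace ℝ V]
    [FiniteDimensional ℝ V] (m : ℕ) (hdim : Module.finrank ℝ V = 2 * m)
    (J : Module.End ℝ V) (hJ2 : J * J = -1)
    (hJd : ∀ u v : V, ⟪J u, J v⟫ = ⟪u, v⟫)
    (g h : Module.End ℝ V)
    (hgo : LinearMap.adjoint g * g = 1)
    (hho : LinearMap.adjoint h * h = 1)
    (pg qg ph qh pgh qgh : Module.End ℝ V)
    (hpg : pg = (2⁻¹ : ℝ) • (g - J * g * J))
    (hqg : qg = (2⁻¹ : ℝ) • (g + J * g * J))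
    (hph : ph = (2⁻¹ : ℝ) • (h - J * h * J))
    (hqh : qh = (2⁻¹ : ℝ) • (h + J * h * J))
    (hpgh : pgh = (2⁻¹ : ℝ) • (g * h - J * (g * h) * J))
    (hqgh : qgh = (2⁻¹ : ℝ) • (g * h + J * (g * h) * J))
    (hpgu : IsUnit pg) (hphu : IsUnit ph) (hpghu : IsUnit pgh)
    (pg' qg' ph' qh' pgh' qgh' : Module.End ℝ V)
    (hpg' : pg' = (2⁻¹ : ℝ) • (Ring.inverse g - J * Ring.inverse g * J))
    (hqg' : qg' = (2⁻¹ : ℝ) • (Ring.inverse g + J * Ring.inverse g * J))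
    (hph' : ph' = (2⁻¹ : ℝ) • (Ring.inverse h - J * Ring.inverse h * J))
    (hqh' : qh' = (2⁻¹ : ℝ) • (Ring.inverse h + J * Ring.inverse h * J))
    (hpgh' : pgh' = (2⁻¹ : ℝ) • (Ring.inverse (g * h) - J * Ring.inverse (g * h) * J))
    (hqgh' : qgh' = (2⁻¹ : ℝ) • (Ring.inverse (g * h) + J * Ring.inverse (g * h) * J))
    (Th Tghat Thhat Tghhat : Module.End ℝ V)
    (hTh : Th = qh * Ring.inverse ph)
    (hTghat : Tghat = qg' * Ring.inverse pg')
    (hThhat : Thhat = qh' * Ring.inverse ph')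
    (hTghhat : Tghhat = qgh' * Ring.inverse pgh')
    (S : Module.End ℝ V)
    (hSJ : S * J = -(J * S)) (hSsk : LinearMap.adjoint S = -S)
    (hS : Module.End ℝ V)
    (hhS : hS = Th + Ring.inverse (LinearMap.adjoint ph) * S *
      Ring.inverse (1 - Thhat * S) * Ring.inverse ph)
    (hu1 : IsUnit (1 - Thhat * S)) (hu2 : IsUnit (1 - Tghat * hS)) :
    ((1 - S * Tghhat) * J = J * (1 - S * Tghhat)) ∧
    ((1 - Th * Tghat) * J = J * (1 - Th * Tghat)) ∧
    ((1 - S * Thhat) * J = J * (1 - S * Thhat)) ∧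
    ((1 - hS * Tghat) * J = J * (1 - hS * Tghat)) ∧
    cdet J (1 - S * Tghhat) * cdet J (1 - Th * Tghat) =
      cdet J (1 - S * Thhat) * cdet J (1 - hS * Tghat) := by
  subst_vars
  have key := stmt_12_general hJ2 (.of_mul_eq_one_right _ hgo) (.of_mul_eq_one_right _ hho)
    hpgu hphu hpghu (by rwa [SemiconjBy, neg_mul]) hu1
  rw [mobiusAct, ← adjoint_linPart hJ2 hJd hho] at key
  exact key
end
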